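/- arXiv:1901.02316 — 2 statements merged into one kernel-verified Lean document; each statement's English description precedes it below -/
import Mathlib

section
/- Every w-split R-module is w-projective. -/
open CategoryTheory

universe u

section Defs
variable (R : Type u) [CommRing R]

/-- `J` is a Glaz–Vasconcelos ideal (GV-ideal): finitely generated and the natural map
`R → Hom_R(J, R)`, `r ↦ (x ↦ r•x)`, is an isomorphism. -/
def IsGVIdeal (J : Ideal R) : Prop :=
  J.FG ∧ Function.Bijective fun r : R =>
    ((LinearMap.lsmul R R r).comp J.subtype : J →ₗ[R] R)

variable (M : Type u) [AddCommGroup M] [Module R M]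

/-- `M` is GV-torsion: every element is killed by some GV-ideal. -/
def IsGVTorsion : Prop :=
  ∀ x : M, ∃ J : Ideal R, IsGVIdeal R J ∧ ∀ a ∈ J, a • x = 0

/-- `M` is GV-torsionfree: no nonzero element is killed by a GV-ideal. -/
def IsGVTorsionFree : Prop :=
  ∀ x : M, (∃ J : Ideal R, IsGVIdeal R J ∧ ∀ a ∈ J, a • x = 0) → x = 0

/-- The w-splitting condition on the epimorphism `g` of a short exact sequence:
there are a GV-ideal `⟨d₁,…,dₙ⟩` and maps `hₖ` with `g ∘ hₖ = (dₖ•·)`. -/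
def IsWSplitSeq {B C : Type u} [AddCommGroup B] [Module R B] [AddCommGroup C] [Module R C]
    (g : B →ₗ[R] C) : Prop :=
  ∃ (n : ℕ) (d : Fin n → R), IsGVIdeal R (Ideal.span (Set.range d)) ∧
    ∃ h : Fin n → (C →ₗ[R] B), ∀ k, ∀ c : C, g (h k c) = d k • c

/-- `M` is a w-split module: some short exact sequence `0 → K → P → M → 0` with
`P` projective is w-split. -/
def IsWSplitModule : Prop :=
  ∃ (P : Type u) (_ : AddCommGroup P) (_ : Module R P), Module.Projective R P ∧
    ∃ g : P →ₗ[R] M, Function.Surjective g ∧ IsWSplitSeq R g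

/-- The Ext group `Ext^n_R(M, N)` as an object of `ModuleCat R`. -/
noncomputable def extMod (n : ℕ) (N : Type u) [AddCommGroup N] [Module R N] : ModuleCat.{u} R :=
  ((Ext R (ModuleCat.{u} R) n).obj (Opposite.op (ModuleCat.of R M))).obj (ModuleCat.of R N)

/-- `M` is a w-module: GV-torsionfree and `Ext¹_R(R/J, M) = 0` for all GV-ideals `J`. -/
def IsWModule : Prop :=
  IsGVTorsionFree R M ∧
    ∀ J : Ideal R, IsGVIdeal R J → Subsingleton (extMod R (R ⧸ J) 1 M)

/-- `ι : M →ₗ E` exhibits `E` as a w-envelope `M_w` of the GV-torsionfree module `M`: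
`E` is a w-module containing `M` with GV-torsion quotient `E/M`. -/
def IsWEnvelope (E : Type u) [AddCommGroup E] [Module R E] (ι : M →ₗ[R] E) : Prop :=
  Function.Injective ι ∧ IsWModule R E ∧ IsGVTorsion R (E ⧸ LinearMap.range ι)

/-- `M` is w-projective: `Ext¹_R(L(M), N)` is GV-torsion for every GV-torsionfree
w-module `N`, where `L(M) = (M/tor_GV(M))_w`. -/
def IsWProjective : Prop :=
  ∀ (T : Submodule R M),
    (∀ x : M, x ∈ T ↔ ∃ J : Ideal R, IsGVIdeal R J ∧ ∀ a ∈ J, a • x = 0) →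
    ∀ (L : Type u) (_ : AddCommGroup L) (_ : Module R L) (ι : (M ⧸ T) →ₗ[R] L),
      IsWEnvelope R (M ⧸ T) L ι →
      ∀ (N : Type u) (_ : AddCommGroup N) (_ : Module R N),
        IsGVTorsionFree R N → IsWModule R N → IsGVTorsion R (extMod R L 1 N)

/-- `I` is a w-ideal: `I_w = I`, i.e. any `x` with `Jx ⊆ I` for some GV-ideal `J`
already lies in `I`. -/
def IsWIdeal (I : Ideal R) : Prop :=
  ∀ x : R, (∃ J : Ideal R, IsGVIdeal R J ∧ ∀ a ∈ J, a * x ∈ I) → x ∈ I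

/-- `I` is a maximal w-ideal: maximal among proper w-ideals of `R`. -/
def IsMaximalWIdeal (I : Ideal R) : Prop :=
  I ≠ ⊤ ∧ IsWIdeal R I ∧ ∀ I' : Ideal R, IsWIdeal R I' → I' ≠ ⊤ → I ≤ I' → I = I'

end Defs

/-!
Let `0 → K → P → M → 0` be w-split by `hₖ : M → P` with `g ∘ hₖ = dₖ`, let `T = tor_GV(M)`,
`L = (M/T)_w`, and let `N` be a w-module. The canonical map `p : M → L` induces an injection
`Ext¹(L, N) → Ext¹(M, N)`: its kernel `T` is GV-torsion, so `Hom(T, N) = 0`, and its cokernel `C` is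
GV-torsion, so `Ext¹(C, N) = 0`. Since `dₖ • p = p ∘ g ∘ hₖ` factors through the projective module
`P`, the scalar `dₖ` kills the image of this injection. Hence the GV-ideal `⟨d₁, …, dₙ⟩` kills
`Ext¹(L, N)`.

For `Ext¹(C, N) = 0`, embed `N` in an injective module `E`. As `Ext¹(R/J, N) = 0` for GV-ideals `J`,
the map `E → E/N` is surjective on GV-torsion; it is also injective there because `N` is
GV-torsionfree. So every map `C → E/N` lifts to `E`.
-/

section ExtComparison

universe v w

variable {A : Type*} [Ring A] {C : Type*} [Category.{v} C] [Abelian C] [Linear A C] {X Y : C}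
  (P : ProjectiveResolution X) {n : ℕ}

theorem d_comp_iCycles_linearYonedaObj (z : (P.complex.linearYonedaObj A Y).cycles n) :
    P.complex.d (n + 1) n ≫ (P.complex.linearYonedaObj A Y).iCycles n z = 0 :=
  congr($((P.complex.linearYonedaObj A Y).iCycles_d n (n + 1)) z)

variable [HasExt.{w} C]

theorem smul_extMk (a : A) (f : P.complex.X n ⟶ Y) (m : ℕ) (hm : n + 1 = m)
    (hf : P.complex.d m n ≫ f = 0) :
    a • P.extMk f m hm hf = P.extMk (a • f) m hm (by rw [Linear.comp_smul, hf, smul_zero]) := by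
  simp only [Abelian.Ext.smul_eq_comp_mk₀, P.extMk_comp_mk₀, Linear.comp_smul, Category.comp_id]

variable (A Y n) in
/-- The map sending an `n`-cocycle of `Hom(P, Y)` to its class in the group `Abelian.Ext X Y n`
defined via the derived category. -/
noncomputable def cyclesToAbelianExt :
    (P.complex.linearYonedaObj A Y).cycles n →ₗ[A] Abelian.Ext X Y n where
  toFun z := P.extMk ((P.complex.linearYonedaObj A Y).iCycles n z) (n + 1) rfl
    (d_comp_iCycles_linearYonedaObj P z)
  map_add' z w := by
    simp only [map_add]
    exact (P.add_extMk ..).symm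
  map_smul' a z := by
    simp only [map_smul]
    exact (smul_extMk P ..).symm

variable (A Y n) in
theorem cyclesToAbelianExt_surjective : Function.Surjective (cyclesToAbelianExt A Y P n) := by
  intro α
  obtain ⟨f, hf, rfl⟩ := P.extMk_surjective α (n + 1) rfl
  let K := P.complex.linearYonedaObj A Y
  obtain ⟨z, rfl⟩ : ∃ z, K.iCycles n z = f :=
    ⟨K.cyclesMk f (n + 1) (by simp) hf, K.i_cyclesMk f (n + 1) (by simp) hf⟩
  exact ⟨z, rfl⟩

variable (A Y n) in
theorem ker_cyclesToAbelianExt :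
    LinearMap.ker (cyclesToAbelianExt A Y P (n + 1)) =
      LinearMap.ker ((P.complex.linearYonedaObj A Y).homologyπ (n + 1)).hom := by
  let K := P.complex.linearYonedaObj A Y
  ext z
  trans ∃ g, K.toCycles n (n + 1) g = z
  · refine (P.extMk_eq_zero_iff _ _ rfl (d_comp_iCycles_linearYonedaObj P z) n rfl).trans
      (exists_congr fun g ↦ ?_)
    rw [← ((ModuleCat.mono_iff_injective (K.iCycles (n + 1))).1 inferInstance).eq_iff]
    exact Eq.congr_left congr($(K.toCycles_i n (n + 1)) g).symm
  · have := (ShortComplex.mk _ _ (K.toCycles_comp_homologyπ n (n + 1))).exact_of_g_is_cokernel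
      (K.homologyIsCokernel n (n + 1) (by simp))
    exact ((ShortComplex.ShortExact.moduleCat_exact_iff_function_exact _).1 this z).symm

variable (A X Y n) in
/-- The comparison between the two `Ext` modules of Mathlib: the derived functor of `Hom(-, Y)`, and
the group of morphisms in the derived category. -/
noncomputable def extLinearEquivAbelianExt [EnoughProjectives C] :
    ((Ext A C (n + 1)).obj (.op X)).obj Y ≃ₗ[A] Abelian.Ext X Y (n + 1) :=
  let P := projectiveResolution X
  have hπ : Function.Surjective ((P.complex.linearYonedaObj A Y).homologyπ (n + 1)).hom :=
    (ModuleCat.epi_iff_surjective _).1 inferInstance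
  (P.isoExt (n + 1) Y).toLinearEquiv ≪≫ₗ
    (LinearMap.quotKerEquivOfSurjective _ hπ).symm ≪≫ₗ
    Submodule.quotEquivOfEq _ _ (ker_cyclesToAbelianExt A Y P n).symm ≪≫ₗ
    LinearMap.quotKerEquivOfSurjective _ (cyclesToAbelianExt_surjective A Y P (n + 1))

end ExtComparison

section ExtExactSequences

open Abelian

universe v w

variable {C : Type*} [Category.{v} C] [Abelian C] [HasExt.{w} C] {S : ShortComplex C}

theorem precomp_mk₀_injective_of_subsingleton_ext_X₃ (hS : S.ShortExact) (Y : C) (n : ℕ)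
    [Subsingleton (Ext S.X₃ Y n)] :
    Function.Injective ((Ext.mk₀ S.f).precomp Y (zero_add n)) := by
  rw [injective_iff_map_eq_zero]
  intro x hx
  obtain ⟨y, rfl⟩ := Ext.contravariant_sequence_exact₂ hS Y x hx
  rw [Subsingleton.elim y 0, Ext.comp_zero]

theorem precomp_mk₀_injective_of_subsingleton_ext_X₁ (hS : S.ShortExact) (Y : C) (n : ℕ)
    [Subsingleton (Ext S.X₁ Y n)] :
    Function.Injective ((Ext.mk₀ S.g).precomp Y (zero_add (1 + n))) := by
  rw [injective_iff_map_eq_zero]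
  intro x hx
  obtain ⟨y, rfl⟩ := Ext.contravariant_sequence_exact₃ hS Y x hx rfl
  rw [Subsingleton.elim y 0, Ext.comp_zero]

theorem precomp_mk₀_comp_injective {X Y Z W : C} {f : X ⟶ Y} {g : Y ⟶ Z} {n : ℕ}
    (hf : Function.Injective ((Ext.mk₀ f).precomp W (zero_add n)))
    (hg : Function.Injective ((Ext.mk₀ g).precomp W (zero_add n))) :
    Function.Injective ((Ext.mk₀ (f ≫ g)).precomp W (zero_add n)) := by
  convert hf.comp hg using 1
  ext x
  exact (Ext.mk₀_comp_mk₀_assoc ..).symm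

theorem exists_comp_eq_of_subsingleton_ext_one (hS : S.ShortExact) {Z : C}
    [Subsingleton (Ext Z S.X₁ 1)] (f : Z ⟶ S.X₃) : ∃ g : Z ⟶ S.X₂, g ≫ S.g = f := by
  obtain ⟨g, hg⟩ := Ext.covariant_sequence_exact₃ Z hS (Ext.mk₀ f) (zero_add 1)
    (Subsingleton.elim _ _)
  obtain ⟨g, rfl⟩ := Ext.mk₀_bijective _ _ |>.2 g
  exact ⟨g, Ext.mk₀_bijective _ _ |>.1 (by rw [← Ext.mk₀_comp_mk₀, hg])⟩

theorem subsingleton_ext_one_of_exists_comp_eq (hS : S.ShortExact) [Injective S.X₂] {Z : C}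
    (h : ∀ f : Z ⟶ S.X₃, ∃ g : Z ⟶ S.X₂, g ≫ S.g = f) : Subsingleton (Ext Z S.X₁ 1) := by
  refine subsingleton_of_forall_eq 0 fun x ↦ ?_
  obtain ⟨f, rfl⟩ := Ext.covariant_sequence_exact₁ Z hS x (Ext.eq_zero_of_injective _) (zero_add 1)
  obtain ⟨f, rfl⟩ := Ext.mk₀_bijective _ _ |>.2 f
  obtain ⟨g, rfl⟩ := h f
  rw [← Ext.mk₀_comp_mk₀, Ext.comp_assoc_of_second_deg_zero, hS.comp_extClass, Ext.comp_zero]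

theorem smul_ext_eq_zero_of_factors_through_projective {A : Type*} [Ring A] [Linear A C]
    {M L P Y : C} [Projective P] {n : ℕ} {p : M ⟶ L}
    (hp : Function.Injective ((Ext.mk₀ p).precomp Y (zero_add (n + 1)))) {a : A}
    {h : M ⟶ P} {g : P ⟶ L} (hgh : h ≫ g = a • p) (x : Ext L Y (n + 1)) : a • x = 0 := by
  refine (injective_iff_map_eq_zero _).1 hp _ ?_
  calc (Ext.mk₀ p).comp (a • x) (zero_add _)
      = (Ext.mk₀ (a • p)).comp x (zero_add _) := by
        rw [Ext.mk₀_smul, Ext.comp_smul, Ext.smul_comp]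
    _ = (Ext.mk₀ h).comp ((Ext.mk₀ g).comp x (zero_add _)) (zero_add _) := by
        rw [← hgh, Ext.mk₀_comp_mk₀_assoc]
    _ = 0 := by rw [Ext.eq_zero_of_projective ((Ext.mk₀ g).comp x _), Ext.comp_zero]

end ExtExactSequences

section GVTorsion

variable {R : Type u} [CommRing R]

theorem isGVIdeal_top : IsGVIdeal R ⊤ := by
  refine ⟨⟨{1}, by simp⟩, fun r s hrs ↦ ?_, fun φ ↦ ⟨φ ⟨1, trivial⟩, ?_⟩⟩
  · simpa using LinearMap.congr_fun hrs ⟨1, trivial⟩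
  · ext x
    calc φ ⟨1, trivial⟩ * x = (x : R) • φ ⟨1, trivial⟩ := mul_comm _ _
      _ = φ x := by rw [← map_smul]; exact congr(φ $(Subtype.ext (mul_one _)))

namespace IsGVIdeal

variable {I J : Ideal R}

theorem eq_zero_of_forall_mul_eq_zero (hJ : IsGVIdeal R J) {r : R} (h : ∀ a ∈ J, r * a = 0) :
    r = 0 :=
  hJ.2.1 (LinearMap.ext fun a ↦ by simpa using h a a.2)

/-- The isomorphism `R ≅ Hom_R(J, R)` of a GV-ideal `J`. -/
noncomputable def linearEquivDual (hJ : IsGVIdeal R J) : R ≃ₗ[R] Module.Dual R J :=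
  LinearEquiv.ofBijective (LinearMap.lcomp R R J.subtype ∘ₗ LinearMap.lsmul R R) hJ.2

theorem linearEquivDual_symm_mul (hJ : IsGVIdeal R J) (φ : Module.Dual R J) (a : J) :
    hJ.linearEquivDual.symm φ * a = φ a :=
  LinearMap.congr_fun (hJ.linearEquivDual.apply_symm_apply φ) a

theorem exists_forall_mul_eq_apply_of_mul (hI : IsGVIdeal R I) (hJ : IsGVIdeal R J)
    (φ : Module.Dual R ↥(I * J)) : ∃ r : R, ∀ x, r * x = φ x := by
  let β : I →ₗ[R] Module.Dual R J :=
    LinearMap.mk₂ R (fun a b ↦ φ ⟨a * b, Ideal.mul_mem_mul a.2 b.2⟩)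
      (fun a a' b ↦ by rw [← map_add]; exact congr(φ $(Subtype.ext (add_mul ..))))
      (fun c a b ↦ by rw [← map_smul]; exact congr(φ $(Subtype.ext (mul_assoc ..))))
      (fun a b b' ↦ by rw [← map_add]; exact congr(φ $(Subtype.ext (mul_add ..))))
      (fun c a b ↦ by rw [← map_smul]; exact congr(φ $(Subtype.ext (mul_left_comm ..))))
  refine ⟨hI.linearEquivDual.symm (hJ.linearEquivDual.symm ∘ₗ β), fun ⟨x, hx⟩ ↦ ?_⟩
  induction hx using Submodule.mul_induction_on' with
  | mem_mul_mem a ha b hb =>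
    rw [← mul_assoc, hI.linearEquivDual_symm_mul _ ⟨a, ha⟩]
    exact hJ.linearEquivDual_symm_mul (β ⟨a, ha⟩) ⟨b, hb⟩
  | add x hx y hy ihx ihy =>
    rw [mul_add, ihx, ihy, ← map_add]
    rfl

theorem mul (hI : IsGVIdeal R I) (hJ : IsGVIdeal R J) : IsGVIdeal R (I * J) := by
  refine ⟨hI.1.mul hJ.1, (injective_iff_map_eq_zero
    (LinearMap.lcomp R R (I * J).subtype ∘ₗ LinearMap.lsmul R R)).2 fun r hr ↦ ?_, fun φ ↦ ?_⟩
  · refine hI.eq_zero_of_forall_mul_eq_zero fun a ha ↦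
      hJ.eq_zero_of_forall_mul_eq_zero fun b hb ↦ ?_
    simpa [mul_assoc] using LinearMap.congr_fun hr ⟨a * b, Ideal.mul_mem_mul ha hb⟩
  · exact (hI.exists_forall_mul_eq_apply_of_mul hJ φ).imp fun r ↦ LinearMap.ext

end IsGVIdeal

variable (R) in
/-- The GV-torsion submodule `tor_GV(M)`. -/
def gvTorsion (M : Type u) [AddCommGroup M] [Module R M] : Submodule R M where
  carrier := {x | ∃ J : Ideal R, IsGVIdeal R J ∧ ∀ a ∈ J, a • x = 0}
  zero_mem' := ⟨⊤, isGVIdeal_top, fun a _ ↦ smul_zero a⟩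
  add_mem' := fun ⟨I, hI, hx⟩ ⟨J, hJ, hy⟩ ↦ ⟨I * J, hI.mul hJ, fun a ha ↦ by
    rw [smul_add, hx a (Ideal.mul_le_left ha), hy a (Ideal.mul_le_right ha), add_zero]⟩
  smul_mem' := fun r _ ⟨J, hJ, hx⟩ ↦ ⟨J, hJ, fun a ha ↦ by rw [smul_comm, hx a ha, smul_zero]⟩

variable {M N E Q C : Type u} [AddCommGroup M] [Module R M] [AddCommGroup N] [Module R N]
  [AddCommGroup E] [Module R E] [AddCommGroup Q] [Module R Q] [AddCommGroup C] [Module R C]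

theorem mem_gvTorsion {x : M} :
    x ∈ gvTorsion R M ↔ ∃ J : Ideal R, IsGVIdeal R J ∧ ∀ a ∈ J, a • x = 0 :=
  Iff.rfl

theorem map_mem_gvTorsion (f : M →ₗ[R] N) {x : M} (hx : x ∈ gvTorsion R M) :
    f x ∈ gvTorsion R N := by
  obtain ⟨J, hJ, hx⟩ := hx
  exact ⟨J, hJ, fun a ha ↦ by rw [← map_smul, hx a ha, map_zero]⟩

theorem map_mem_gvTorsion_iff {f : M →ₗ[R] N} (hf : Function.Injective f) {x : M} :
    f x ∈ gvTorsion R N ↔ x ∈ gvTorsion R M := by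
  simp only [mem_gvTorsion, ← map_smul, map_eq_zero_iff f hf]

theorem isGVTorsion_gvTorsion : IsGVTorsion R (gvTorsion R M) := fun x ↦
  (map_mem_gvTorsion_iff (gvTorsion R M).injective_subtype).1 x.2

theorem IsGVTorsion.linearMap_eq_zero (hM : IsGVTorsion R M) (hN : IsGVTorsionFree R N)
    (f : M →ₗ[R] N) : f = 0 :=
  LinearMap.ext fun x ↦ hN _ (map_mem_gvTorsion f (hM x))

theorem IsGVTorsion.exists_linearMap_comp_eq {i : N →ₗ[R] E} {q : E →ₗ[R] Q}
    (hi : Function.Injective i) (hiq : Function.Exact i q) (hN : IsGVTorsionFree R N)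
    (hq : gvTorsion R Q ≤ (gvTorsion R E).map q) (hC : IsGVTorsion R C) (f : C →ₗ[R] Q) :
    ∃ g : C →ₗ[R] E, q ∘ₗ g = f := by
  -- `f` takes values in `gvTorsion R Q`, over which `q` restricts to an isomorphism.
  let qTor : gvTorsion R E →ₗ[R] gvTorsion R Q := q.restrict fun _ ↦ map_mem_gvTorsion q
  have qTor_injective : Function.Injective qTor := by
    refine (injective_iff_map_eq_zero _).2 fun e he ↦ ?_
    obtain ⟨n, hn⟩ := (hiq e).1 congr(($he).1)
    have hn0 : n = 0 := hN n ((map_mem_gvTorsion_iff hi).1 (hn ▸ e.2))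
    exact Subtype.ext (by rw [← hn, hn0, map_zero, Submodule.coe_zero])
  have qTor_surjective : Function.Surjective qTor := by
    intro y
    obtain ⟨e, he, hey⟩ := hq y.2
    exact ⟨⟨e, he⟩, Subtype.ext hey⟩
  let eTor := LinearEquiv.ofBijective qTor ⟨qTor_injective, qTor_surjective⟩
  refine ⟨(gvTorsion R E).subtype ∘ₗ eTor.symm ∘ₗ f.codRestrict _ fun c ↦
    map_mem_gvTorsion f (hC c), LinearMap.ext fun c ↦ ?_⟩
  exact congr(($(eTor.apply_symm_apply ⟨f c, map_mem_gvTorsion f (hC c)⟩)).1)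

end GVTorsion

section WModule

open Abelian

variable {R : Type u} [CommRing R]
variable {M N L C : Type u} [AddCommGroup M] [Module R M] [AddCommGroup N] [Module R N]
  [AddCommGroup L] [Module R L] [AddCommGroup C] [Module R C]

theorem IsGVTorsion.subsingleton_ext_zero (hM : IsGVTorsion R M) (hN : IsGVTorsionFree R N) :
    Subsingleton (Ext (ModuleCat.of R M) (ModuleCat.of R N) 0) := by
  have : Subsingleton (ModuleCat.of R M ⟶ ModuleCat.of R N) :=
    subsingleton_of_forall_eq 0 fun f ↦ ModuleCat.hom_ext (hM.linearMap_eq_zero hN f.hom)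
  exact (Equiv.ofBijective _ (Ext.mk₀_bijective _ _)).symm.subsingleton

variable (R M N) in
/-- In positive degrees `extMod` is the `Ext` group of the derived category, for which Mathlib has
the long exact sequences. -/
noncomputable def extModLinearEquiv (n : ℕ) :
    extMod R M (n + 1) N ≃ₗ[R] Ext (ModuleCat.of R M) (ModuleCat.of R N) (n + 1) :=
  extLinearEquivAbelianExt R (ModuleCat.of R M) (ModuleCat.of R N) n

theorem IsWModule.gvTorsion_le_map {S : ShortComplex (ModuleCat.{u} R)} (hS : S.ShortExact)
    (hN : IsWModule R S.X₁) : gvTorsion R S.X₃ ≤ (gvTorsion R S.X₂).map S.g.hom := by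
  rintro x ⟨J, hJ, hx⟩
  have : Subsingleton (Ext (ModuleCat.of R (R ⧸ J)) S.X₁ 1) :=
    have := hN.2 J hJ
    (extModLinearEquiv R (R ⧸ J) S.X₁ 0).symm.toEquiv.subsingleton
  let f : (R ⧸ J) →ₗ[R] S.X₃ := J.liftQ (LinearMap.toSpanSingleton R _ x) fun a ha ↦ hx a ha
  obtain ⟨g, hg⟩ := exists_comp_eq_of_subsingleton_ext_one hS (ModuleCat.ofHom f)
  refine ⟨g (Submodule.mkQ J 1), ⟨J, hJ, fun a ha ↦ ?_⟩, ?_⟩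
  · have ha0 : Submodule.mkQ J a = 0 := (Submodule.Quotient.mk_eq_zero J).2 ha
    rw [← map_smul, ← map_smul, smul_eq_mul, mul_one, ha0, map_zero]
  · exact congr($hg (Submodule.mkQ J 1)).trans (one_smul R x)

theorem IsGVTorsion.subsingleton_ext_one (hC : IsGVTorsion R C) (hN : IsWModule R N) :
    Subsingleton (Ext (ModuleCat.of R C) (ModuleCat.of R N) 1) := by
  let S := ShortComplex.mk (Injective.ι (ModuleCat.of R N)) (Limits.cokernel.π _)
    (Limits.cokernel.condition _)
  have hS : S.ShortExact := { exact := S.exact_of_g_is_cokernel (Limits.cokernelIsCokernel _) }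
  have : Injective S.X₂ := inferInstanceAs (Injective (Injective.under _))
  refine subsingleton_ext_one_of_exists_comp_eq hS fun f ↦ ?_
  obtain ⟨g, hg⟩ := hC.exists_linearMap_comp_eq ((ModuleCat.mono_iff_injective _).1 hS.mono_f)
    ((ShortComplex.ShortExact.moduleCat_exact_iff_function_exact S).1 hS.exact) hN.1
    (IsWModule.gvTorsion_le_map hS hN) f.hom
  exact ⟨ModuleCat.ofHom g, ModuleCat.hom_ext hg⟩

theorem precomp_mk₀_injective_of_isGVTorsion_ker {p : M →ₗ[R] L} (hp : Function.Surjective p)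
    (hK : IsGVTorsion R (LinearMap.ker p)) (hN : IsGVTorsionFree R N) :
    Function.Injective ((Ext.mk₀ (ModuleCat.ofHom p)).precomp (ModuleCat.of R N) (zero_add 1)) :=
  have : Subsingleton (Ext p.shortComplexKer.X₁ (ModuleCat.of R N) 0) :=
    hK.subsingleton_ext_zero hN
  precomp_mk₀_injective_of_subsingleton_ext_X₁ (p.shortExact_shortComplexKer hp) _ 0

theorem precomp_mk₀_injective_of_isGVTorsion_coker {i : M →ₗ[R] L} (hi : Function.Injective i)
    (hC : IsGVTorsion R (L ⧸ LinearMap.range i)) (hN : IsWModule R N) :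
    Function.Injective ((Ext.mk₀ (ModuleCat.ofHom i)).precomp (ModuleCat.of R N) (zero_add 1)) := by
  let S := ModuleCat.shortComplexOfCompEqZero i (LinearMap.range i).mkQ
    i.exact_map_mkQ_range.linearMap_comp_eq_zero
  have : Subsingleton (Ext S.X₃ (ModuleCat.of R N) 1) := hC.subsingleton_ext_one hN
  exact precomp_mk₀_injective_of_subsingleton_ext_X₃ (S := S) (ModuleCat.shortComplex_shortExact S
    i.exact_map_mkQ_range hi (Submodule.mkQ_surjective _)) _ 1

theorem precomp_mk₀_injective_of_isGVTorsion_ker_coker {p : M →ₗ[R] L}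
    (hK : IsGVTorsion R (LinearMap.ker p)) (hC : IsGVTorsion R (L ⧸ LinearMap.range p))
    (hN : IsWModule R N) :
    Function.Injective ((Ext.mk₀ (ModuleCat.ofHom p)).precomp (ModuleCat.of R N) (zero_add 1)) := by
  have hp : ModuleCat.ofHom p =
      ModuleCat.ofHom p.rangeRestrict ≫ ModuleCat.ofHom (LinearMap.range p).subtype := rfl
  have hπ := precomp_mk₀_injective_of_isGVTorsion_ker p.surjective_rangeRestrict
    (by rwa [p.ker_rangeRestrict]) hN.1
  have hι := precomp_mk₀_injective_of_isGVTorsion_coker (LinearMap.range p).injective_subtype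
    (by rwa [Submodule.range_subtype]) hN
  rw [hp]
  exact precomp_mk₀_comp_injective hπ hι

theorem smul_extMod_one_eq_zero {P : Type u} [AddCommGroup P] [Module R P] [Module.Projective R P]
    {p : M →ₗ[R] L} (hK : IsGVTorsion R (LinearMap.ker p))
    (hC : IsGVTorsion R (L ⧸ LinearMap.range p)) (hN : IsWModule R N)
    {a : R} {h : M →ₗ[R] P} {g : P →ₗ[R] M} (hgh : ∀ x, g (h x) = a • x) (x : extMod R L 1 N) :
    a • x = 0 := by
  have : Projective (ModuleCat.of R P) := (IsProjective.iff_projective P).1 inferInstance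
  have hfactor : ModuleCat.ofHom h ≫ ModuleCat.ofHom (p ∘ₗ g) = a • ModuleCat.ofHom p :=
    ModuleCat.hom_ext (LinearMap.ext fun x ↦ by simp [hgh])
  rw [← (extModLinearEquiv R L N 0).map_eq_zero_iff, map_smul]
  exact smul_ext_eq_zero_of_factors_through_projective
    (precomp_mk₀_injective_of_isGVTorsion_ker_coker hK hC hN) hfactor _

end WModule

/-- Every w-split module is w-projective. -/
theorem stmt9 {R : Type u} [CommRing R] {M : Type u} [AddCommGroup M] [Module R M]
    (hM : IsWSplitModule R M) : IsWProjective R M := by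
  obtain ⟨P, _, _, _, g, -, n, d, hd, h, hgh⟩ := hM
  intro T hT L _ _ ι hL N _ _ _ hN x
  obtain rfl : T = gvTorsion R M := SetLike.ext hT
  have hK : IsGVTorsion R (LinearMap.ker (ι ∘ₗ (gvTorsion R M).mkQ)) := by
    rw [LinearMap.ker_comp_of_ker_eq_bot _ (LinearMap.ker_eq_bot.2 hL.1), Submodule.ker_mkQ]
    exact isGVTorsion_gvTorsion
  have hC : IsGVTorsion R (L ⧸ LinearMap.range (ι ∘ₗ (gvTorsion R M).mkQ)) := by
    rw [LinearMap.range_comp_of_range_eq_top _ (Submodule.range_mkQ _)]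
    exact hL.2.2
  refine ⟨Ideal.span (Set.range d), hd, fun a ha ↦ ?_⟩
  have hd_mem : Set.range d ⊆ (R ∙ x).annihilator := by
    rintro _ ⟨k, rfl⟩
    exact (Submodule.mem_annihilator_span_singleton x _).2
      (smul_extMod_one_eq_zero hK hC hN (hgh k) x)
  exact (Submodule.mem_annihilator_span_singleton x a).1 (Ideal.span_le.2 hd_mem ha)
end

section
/- Let M be a GV-torsionfree w-projective R-module. Then M is w-split if and only if there is a GV-ideal J of R with J·M_w ⊆ M. -/
open CategoryTheory

universe u

/-!
The GV-torsionfree modules and the w-modules are closed under direct sums, retracts and (for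
w-modules) kernels of maps to GV-torsionfree modules, so projective modules are w-modules, and so
is the kernel `K` of a free cover `π : F → M_w`. As `Ext¹(M_w, K)` is GV-torsion, the class of
`0 → K → F → M_w → 0` is killed by a GV-ideal `J'`; this says that the scalars in `J'`, seen as
endomorphisms of `M_w`, factor through `π`. If `J` is a GV-ideal carrying `M_w` into `M`, the
scalars in the GV-ideal `J J'` then lift along any epimorphism onto `M`. Conversely, maps
`h : M → P` into a projective module extend to `M_w`, and an identity `g ∘ h = d` with `d ∈ R`
persists for the extension because `M_w` is GV-torsionfree; hence `d M_w ⊆ M`.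
-/

section ProjectivePresentation

variable {R K F K' F' X N A : Type*} [CommRing R]
  [AddCommGroup K] [Module R K] [AddCommGroup F] [Module R F]
  [AddCommGroup K'] [Module R K'] [AddCommGroup F'] [Module R F']
  [AddCommGroup X] [Module R X] [AddCommGroup N] [Module R N] [AddCommGroup A] [Module R A]
  {i : K →ₗ[R] F} {π : F →ₗ[R] X} {i' : K' →ₗ[R] F'} {π' : F' →ₗ[R] X}

theorem exists_map_of_projective_presentation [Module.Projective R F]
    (h : Function.Exact i π) (hi' : Function.Injective i') (h' : Function.Exact i' π')
    (hπ' : Function.Surjective π') :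
    ∃ (u : F →ₗ[R] F') (v : K →ₗ[R] K'), π' ∘ₗ u = π ∧ i' ∘ₗ v = u ∘ₗ i := by
  obtain ⟨u, hu⟩ := Module.projective_lifting_property π' π hπ'
  have hui : ∀ k, (u ∘ₗ i) k ∈ LinearMap.range i' := fun k => by
    rw [← h'.linearMap_ker_eq, LinearMap.mem_ker, LinearMap.comp_apply, ← LinearMap.comp_apply π',
      hu, h.apply_apply_eq_zero]
  exact ⟨u, (u ∘ₗ i).codRestrictOfInjective i' hi' hui, hu,
    LinearMap.codRestrictOfInjective_comp ..⟩

theorem sub_comp_mem_range_lcomp (hi : Function.Injective i) (h : Function.Exact i π)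
    {u : F →ₗ[R] F} {v : K →ₗ[R] K} (hu : π ∘ₗ u = π) (hv : i ∘ₗ v = u ∘ₗ i) (φ : K →ₗ[R] N) :
    φ - φ ∘ₗ v ∈ LinearMap.range (LinearMap.lcomp R N i) := by
  have hrange : ∀ x, (LinearMap.id - u : F →ₗ[R] F) x ∈ LinearMap.range i := fun x => by
    rw [← h.linearMap_ker_eq, LinearMap.mem_ker, LinearMap.sub_apply, map_sub,
      ← LinearMap.comp_apply π u, hu, LinearMap.id_apply, sub_self]
  let s : F →ₗ[R] K := (LinearMap.id - u).codRestrictOfInjective i hi hrange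
  have hsi : s ∘ₗ i = LinearMap.id - v := by
    rw [← LinearMap.cancel_left hi, ← LinearMap.comp_assoc, LinearMap.codRestrictOfInjective_comp,
      LinearMap.sub_comp, LinearMap.comp_sub, hv, LinearMap.id_comp, LinearMap.comp_id]
  refine ⟨φ ∘ₗ s, ?_⟩
  rw [LinearMap.lcomp_apply', LinearMap.comp_assoc, hsi, LinearMap.comp_sub, LinearMap.comp_id]

/-- Two projective presentations of `X` are homotopy equivalent, so that the cokernel of
`Hom(F, N) → Hom(K, N)` does not depend on the presentation. -/
theorem exists_exact_lcomp_of_exact_lcomp [Module.Projective R F] [Module.Projective R F']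
    (hi : Function.Injective i) (h : Function.Exact i π) (hπ : Function.Surjective π)
    (hi' : Function.Injective i') (h' : Function.Exact i' π') (hπ' : Function.Surjective π')
    {δ' : (K' →ₗ[R] N) →ₗ[R] A} (hδ' : Function.Surjective δ')
    (hexact' : Function.Exact (LinearMap.lcomp R N i') δ') :
    ∃ δ : (K →ₗ[R] N) →ₗ[R] A, Function.Surjective δ ∧
      Function.Exact (LinearMap.lcomp R N i) δ := by
  obtain ⟨u, v, hu, hv⟩ := exists_map_of_projective_presentation h hi' h' hπ'
  obtain ⟨u', v', hu', hv'⟩ := exists_map_of_projective_presentation h' hi h hπ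
  have hvv' (φ : K →ₗ[R] N) : φ - φ ∘ₗ v' ∘ₗ v ∈ LinearMap.range (LinearMap.lcomp R N i) :=
    sub_comp_mem_range_lcomp hi h (u := u' ∘ₗ u) (by rw [← LinearMap.comp_assoc, hu', hu])
      (by rw [← LinearMap.comp_assoc, hv', LinearMap.comp_assoc, hv, LinearMap.comp_assoc]) φ
  have hv'v (φ : K' →ₗ[R] N) : φ - φ ∘ₗ v ∘ₗ v' ∈ LinearMap.range (LinearMap.lcomp R N i') :=
    sub_comp_mem_range_lcomp hi' h' (u := u ∘ₗ u') (by rw [← LinearMap.comp_assoc, hu, hu'])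
      (by rw [← LinearMap.comp_assoc, hv, LinearMap.comp_assoc, hv', LinearMap.comp_assoc]) φ
  refine ⟨δ' ∘ₗ LinearMap.lcomp R N v', fun z => ?_, fun φ => (hexact' _).trans ⟨?_, ?_⟩⟩
  · obtain ⟨φ, rfl⟩ := hδ' z
    have hφ := (hexact' _).2 (hv'v φ)
    rw [map_sub, sub_eq_zero] at hφ
    exact ⟨φ ∘ₗ v, hφ.symm⟩
  · rintro ⟨ψ, hψ⟩
    have hψu : φ ∘ₗ v' ∘ₗ v = (ψ ∘ₗ u) ∘ₗ i :=
      calc φ ∘ₗ v' ∘ₗ v = (ψ ∘ₗ i') ∘ₗ v := congr($(hψ.symm) ∘ₗ v)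
        _ = (ψ ∘ₗ u) ∘ₗ i := by rw [LinearMap.comp_assoc, hv, LinearMap.comp_assoc]
    have hmem := add_mem (hvv' φ) ⟨ψ ∘ₗ u, hψu.symm⟩
    rwa [sub_add_cancel] at hmem
  · rintro ⟨ψ, rfl⟩
    refine ⟨ψ ∘ₗ u', ?_⟩
    simp only [LinearMap.lcomp_apply', LinearMap.comp_assoc, hv']

end ProjectivePresentation

section ExtOne

variable {R : Type u} [CommRing R] {X : Type u} [AddCommGroup X] [Module R X]

theorem exists_surjective_cocycles_extMod (P : ProjectiveResolution (ModuleCat.of R X))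
    (N : Type u) [AddCommGroup N] [Module R N] :
    ∃ q : LinearMap.ker (LinearMap.lcomp R N (P.complex.d 2 1).hom) →ₗ[R] extMod R X 1 N,
      Function.Surjective q ∧
        ∀ φ, q φ = 0 ↔ φ.1 ∈ LinearMap.range (LinearMap.lcomp R N (P.complex.d 1 0).hom) := by
  let C := P.complex.linearYonedaObj R (ModuleCat.of R N)
  let S := C.sc' 0 1 2
  let e : extMod R X 1 N ≅ S.moduleCatLeftHomologyData.H :=
    P.isoExt (R := R) 1 (ModuleCat.of R N) ≪≫
      ShortComplex.homologyMapIso (C.isoSc' 0 1 2 (by simp) (by simp)) ≪≫ S.moduleCatHomologyIso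
  let toCycles : LinearMap.ker (LinearMap.lcomp R N (P.complex.d 2 1).hom) →ₗ[R]
      LinearMap.ker S.g.hom :=
    { toFun := fun φ => ⟨ModuleCat.ofHom φ.1, ModuleCat.hom_ext φ.2⟩
      map_add' := fun _ _ => rfl
      map_smul' := fun _ _ => rfl }
  have htoCycles : Function.Surjective toCycles := fun x =>
    ⟨⟨ModuleCat.Hom.hom x.1, congrArg ModuleCat.Hom.hom x.2⟩, rfl⟩
  refine ⟨e.toLinearEquiv.symm.toLinearMap ∘ₗ (LinearMap.range S.moduleCatToCycles).mkQ ∘ₗ toCycles,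
    e.toLinearEquiv.symm.surjective.comp ((Submodule.mkQ_surjective _).comp htoCycles),
    fun φ => ?_⟩
  calc e.toLinearEquiv.symm (Submodule.Quotient.mk (toCycles φ)) = 0
      ↔ toCycles φ ∈ LinearMap.range S.moduleCatToCycles :=
        e.toLinearEquiv.symm.map_eq_zero_iff.trans (Submodule.Quotient.mk_eq_zero _)
    _ ↔ φ.1 ∈ LinearMap.range (LinearMap.lcomp R N (P.complex.d 1 0).hom) :=
        ⟨fun ⟨ψ, hψ⟩ => ⟨ModuleCat.Hom.hom ψ, congrArg (fun c => ModuleCat.Hom.hom c.1) hψ⟩,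
          fun ⟨ψ, hψ⟩ => ⟨ModuleCat.ofHom ψ, Subtype.ext (ModuleCat.hom_ext hψ)⟩⟩

theorem exists_exact_lcomp_extMod_of_projectiveResolution
    (P : ProjectiveResolution (ModuleCat.of R X)) (N : Type u) [AddCommGroup N] [Module R N] :
    ∃ δ : (LinearMap.ker (P.π.f 0).hom →ₗ[R] N) →ₗ[R] extMod R X 1 N, Function.Surjective δ ∧
      Function.Exact (LinearMap.lcomp R N (LinearMap.ker (P.π.f 0).hom).subtype) δ := by
  have hrange₀ : LinearMap.range (P.complex.d 1 0).hom = LinearMap.ker (P.π.f 0).hom :=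
    P.exact₀.moduleCat_range_eq_ker
  have hrange₁ : LinearMap.range (P.complex.d 2 1).hom = LinearMap.ker (P.complex.d 1 0).hom :=
    (P.exact_succ 0).moduleCat_range_eq_ker
  let d : P.complex.X 1 →ₗ[R] LinearMap.ker (P.π.f 0).hom :=
    (P.complex.d 1 0).hom.codRestrict _ fun x => hrange₀ ▸ LinearMap.mem_range_self _ x
  have hd : Function.Surjective d := fun ⟨y, hy⟩ => by
    obtain ⟨x, rfl⟩ := hrange₀.symm ▸ hy
    exact ⟨x, rfl⟩
  have hexact : Function.Exact (P.complex.d 2 1).hom d :=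
    LinearMap.exact_iff.2 (by rw [LinearMap.ker_codRestrict, hrange₁])
  have hcocycle : ∀ c : P.complex.X 1 →ₗ[R] N,
      LinearMap.lcomp R N (P.complex.d 2 1).hom c = 0 ↔ ∃ φ, LinearMap.lcomp R N d φ = c :=
    LinearMap.exact_lcomp_of_exact_of_surjective N hexact hd
  obtain ⟨q, hq, hq0⟩ := exists_surjective_cocycles_extMod P N
  refine ⟨q ∘ₗ LinearMap.codRestrict _ (LinearMap.lcomp R N d) fun φ => (hcocycle _).2 ⟨φ, rfl⟩,
    fun z => ?_, fun φ => (hq0 _).trans (exists_congr fun ψ => ?_)⟩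
  · obtain ⟨c, rfl⟩ := hq z
    obtain ⟨φ, hφ⟩ := (hcocycle c.1).1 c.2
    exact ⟨φ, congrArg q (Subtype.ext hφ)⟩
  · exact (LinearMap.lcomp_injective_of_surjective (S := R) (N := N) d hd).eq_iff
      (a := LinearMap.lcomp R N (LinearMap.ker (P.π.f 0).hom).subtype ψ)

theorem exists_exact_lcomp_extMod {K F : Type*} [AddCommGroup K] [Module R K]
    [AddCommGroup F] [Module R F] [Module.Projective R F] {i : K →ₗ[R] F} {π : F →ₗ[R] X}
    (hi : Function.Injective i) (h : Function.Exact i π) (hπ : Function.Surjective π)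
    (N : Type u) [AddCommGroup N] [Module R N] :
    ∃ δ : (K →ₗ[R] N) →ₗ[R] extMod R X 1 N, Function.Surjective δ ∧
      Function.Exact (LinearMap.lcomp R N i) δ := by
  let P := projectiveResolution (ModuleCat.of R X)
  have : Module.Projective R (P.complex.X 0) :=
    (IsProjective.iff_projective _).2 (P.projective 0)
  obtain ⟨δ, hδ, hexact⟩ := exists_exact_lcomp_extMod_of_projectiveResolution P N
  exact exists_exact_lcomp_of_exact_lcomp hi h hπ (Submodule.injective_subtype _)
    (LinearMap.exact_subtype_ker_map _) ((ModuleCat.epi_iff_surjective (P.π.f 0)).1 inferInstance)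
    hδ hexact

theorem subsingleton_extMod_one_iff {K F : Type*} [AddCommGroup K] [Module R K]
    [AddCommGroup F] [Module R F] [Module.Projective R F] {i : K →ₗ[R] F} {π : F →ₗ[R] X}
    (hi : Function.Injective i) (h : Function.Exact i π) (hπ : Function.Surjective π)
    (N : Type u) [AddCommGroup N] [Module R N] :
    Subsingleton (extMod R X 1 N) ↔ Function.Surjective (LinearMap.lcomp R N i) := by
  obtain ⟨δ, hδ, hexact⟩ := exists_exact_lcomp_extMod hi h hπ N
  rw [LinearMap.surjective_iff_eq_zero_of_exact hexact, ← LinearMap.range_eq_bot,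
    LinearMap.range_eq_top.2 hδ, eq_comm, subsingleton_iff_bot_eq_top, Submodule.subsingleton_iff]

end ExtOne

section GVIdeal

variable {R : Type u} [CommRing R]

namespace IsGVIdeal

variable {I J : Ideal R}

/-- The isomorphism `R ≅ Hom_R(J, R)` that defines GV-ideals, as a linear equivalence. -/
noncomputable def homEquiv (hJ : IsGVIdeal R J) : R ≃ₗ[R] (J →ₗ[R] R) :=
  LinearEquiv.ofBijective (LinearMap.lcomp R R J.subtype ∘ₗ LinearMap.lsmul R R) hJ.2

theorem homEquiv_apply_apply (hJ : IsGVIdeal R J) (r : R) (a : J) : hJ.homEquiv r a = r * a :=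
  rfl

end IsGVIdeal

end GVIdeal

section GVClosure

variable {R : Type u} [CommRing R] {M : Type*} [AddCommGroup M] [Module R M]

/-- The GV-closure of a submodule `S` of `M`: the elements carried into `S` by some GV-ideal.
It is the `w`-envelope of `S` computed inside `M` instead of the injective envelope of `S`. -/
def gvClosure (S : Submodule R M) : Submodule R M where
  carrier := {x | ∃ J : Ideal R, IsGVIdeal R J ∧ ∀ a ∈ J, a • x ∈ S}
  zero_mem' := ⟨⊤, isGVIdeal_top, fun a _ => by simp only [smul_zero, zero_mem]⟩
  add_mem' := fun ⟨I, hI, hx⟩ ⟨J, hJ, hy⟩ => ⟨I * J, hI.mul hJ, fun a ha => by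
    rw [smul_add]
    exact add_mem (hx a (Ideal.mul_le_left ha)) (hy a (Ideal.mul_le_right ha))⟩
  smul_mem' := fun c _ ⟨J, hJ, hx⟩ => ⟨J, hJ, fun a ha => by
    rw [smul_comm]
    exact S.smul_mem c (hx a ha)⟩

theorem mem_gvClosure {S : Submodule R M} {x : M} :
    x ∈ gvClosure S ↔ ∃ J : Ideal R, IsGVIdeal R J ∧ ∀ a ∈ J, a • x ∈ S :=
  Iff.rfl

theorem le_gvClosure (S : Submodule R M) : S ≤ gvClosure S :=
  fun _ hx => ⟨⊤, isGVIdeal_top, fun a _ => S.smul_mem a hx⟩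

end GVClosure

section GVTorsion

variable {R : Type u} [CommRing R] {M N : Type u} [AddCommGroup M] [Module R M]
  [AddCommGroup N] [Module R N]

theorem isGVTorsion_quotient_iff {S : Submodule R M} :
    IsGVTorsion R (M ⧸ S) ↔ ∀ x, x ∈ gvClosure S := by
  simp only [IsGVTorsion, (Submodule.mkQ_surjective S).forall, mem_gvClosure, Submodule.mkQ_apply,
    ← Submodule.Quotient.mk_smul, Submodule.Quotient.mk_eq_zero]

namespace IsGVTorsionFree

theorem of_injective (hN : IsGVTorsionFree R N) {s : M →ₗ[R] N} (hs : Function.Injective s) :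
    IsGVTorsionFree R M := by
  rintro x ⟨J, hJ, hx⟩
  refine (map_eq_zero_iff s hs).1 (hN _ ⟨J, hJ, fun a ha => ?_⟩)
  rw [← map_smul, hx a ha, map_zero]

theorem finsupp (hN : IsGVTorsionFree R N) (α : Type u) : IsGVTorsionFree R (α →₀ N) := by
  rintro v ⟨J, hJ, hv⟩
  ext x
  exact hN _ ⟨J, hJ, fun a ha => DFunLike.congr_fun (hv a ha) x⟩

theorem linearMap_ext (hN : IsGVTorsionFree R N) {E : Type u} [AddCommGroup E] [Module R E]
    {ι : M →ₗ[R] E} (hE : IsGVTorsion R (E ⧸ LinearMap.range ι)) {f g : E →ₗ[R] N}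
    (hfg : f ∘ₗ ι = g ∘ₗ ι) : f = g := by
  ext e
  obtain ⟨J, hJ, he⟩ := isGVTorsion_quotient_iff.1 hE e
  refine sub_eq_zero.1 (hN _ ⟨J, hJ, fun a ha => ?_⟩)
  obtain ⟨m, hm⟩ := he a ha
  rw [smul_sub, ← map_smul, ← map_smul, ← hm, sub_eq_zero]
  exact LinearMap.congr_fun hfg m

end IsGVTorsionFree

end GVTorsion

theorem exists_finset_forall_support_subset {R M N α : Type*} [CommRing R] [AddCommGroup M]
    [Module R M] [Module.Finite R M] [AddCommGroup N] [Module R N] (f : M →ₗ[R] α →₀ N) :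
    ∃ T : Finset α, ∀ m, (f m).support ⊆ T := by
  classical
  obtain ⟨s, hs⟩ := Module.Finite.fg_top (R := R) (M := M)
  let T := s.biUnion fun m => (f m).support
  have hT : Submodule.map f ⊤ ≤ Finsupp.supported N R (T : Set α) := by
    rw [← hs, Submodule.map_span_le]
    exact fun m hm => Finset.subset_biUnion_of_mem (fun m => (f m).support) hm
  exact ⟨T, fun m => hT (Submodule.mem_map_of_mem trivial)⟩

section WModule

variable {R : Type u} [CommRing R] {M N P E : Type u} [AddCommGroup M] [Module R M]
  [AddCommGroup N] [Module R N] [AddCommGroup P] [Module R P] [AddCommGroup E] [Module R E]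

theorem isWModule_iff :
    IsWModule R N ↔ IsGVTorsionFree R N ∧ ∀ J : Ideal R, IsGVIdeal R J →
      ∀ f : J →ₗ[R] N, ∃ n : N, ∀ a : J, f a = (a : R) • n := by
  refine and_congr_right fun _ => forall₂_congr fun J _ => ?_
  rw [subsingleton_extMod_one_iff J.injective_subtype (LinearMap.exact_subtype_mkQ J)
    J.mkQ_surjective]
  refine forall_congr' fun f => ⟨?_, ?_⟩
  · rintro ⟨g, rfl⟩
    refine ⟨g 1, fun a => ?_⟩
    rw [← map_smul, smul_eq_mul, mul_one]
    rfl
  · rintro ⟨n, hn⟩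
    exact ⟨LinearMap.toSpanSingleton R N n, LinearMap.ext fun a => (hn a).symm⟩

theorem isWModule_self : IsWModule R R := by
  refine isWModule_iff.2 ⟨?_, fun J hJ f => ?_⟩
  · rintro r ⟨J, hJ, hr⟩
    refine hJ.homEquiv.map_eq_zero_iff.1 (LinearMap.ext fun a => ?_)
    rw [hJ.homEquiv_apply_apply, mul_comm]
    exact hr a a.2
  · obtain ⟨r, rfl⟩ := hJ.homEquiv.surjective f
    exact ⟨r, fun a => mul_comm _ _⟩

namespace IsWModule

theorem finsupp (hN : IsWModule R N) (α : Type u) : IsWModule R (α →₀ N) := by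
  refine isWModule_iff.2 ⟨hN.1.finsupp α, fun J hJ f => ?_⟩
  choose n hn using fun x => (isWModule_iff.1 hN).2 J hJ (Finsupp.lapply x ∘ₗ f)
  have : Module.Finite R J := Module.Finite.iff_fg.2 hJ.1
  obtain ⟨T, hT⟩ := exists_finset_forall_support_subset f
  have hnT : ∀ x, n x ≠ 0 → x ∈ T := fun x hx => by
    by_contra hxT
    refine hx (hN.1 _ ⟨J, hJ, fun a ha => ?_⟩)
    rw [← hn x ⟨a, ha⟩]
    exact Finsupp.notMem_support_iff.1 fun hxa => hxT (hT _ hxa)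
  exact ⟨Finsupp.onFinset T n hnT, fun a => Finsupp.ext fun x => hn x a⟩

theorem of_retract (hN : IsWModule R N) {s : P →ₗ[R] N} {r : N →ₗ[R] P}
    (hrs : r ∘ₗ s = LinearMap.id) : IsWModule R P := by
  have hleft : Function.LeftInverse r s := LinearMap.congr_fun hrs
  refine isWModule_iff.2 ⟨hN.1.of_injective hleft.injective, fun J hJ f => ?_⟩
  obtain ⟨n, hn⟩ := (isWModule_iff.1 hN).2 J hJ (s ∘ₗ f)
  refine ⟨r n, fun a => ?_⟩
  rw [← map_smul, ← hn, LinearMap.comp_apply, hleft]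

variable (R P) in
theorem of_projective [Module.Projective R P] : IsWModule R P := by
  obtain ⟨s, hs⟩ := Module.projective_def'.1 (inferInstance : Module.Projective R P)
  exact (isWModule_self.finsupp P).of_retract hs

theorem ker (hN : IsWModule R N) (hE : IsGVTorsionFree R E) (π : N →ₗ[R] E) :
    IsWModule R (LinearMap.ker π) := by
  refine isWModule_iff.2 ⟨hN.1.of_injective (Submodule.injective_subtype _), fun J hJ f => ?_⟩
  obtain ⟨n, hn⟩ := (isWModule_iff.1 hN).2 J hJ ((LinearMap.ker π).subtype ∘ₗ f)
  have hπn : π n = 0 := hE _ ⟨J, hJ, fun a ha => by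
    rw [← map_smul, ← hn ⟨a, ha⟩]
    exact (f ⟨a, ha⟩).2⟩
  exact ⟨⟨n, hπn⟩, fun a => Subtype.ext (hn a)⟩

/-- The graph of the extension is the GV-closure of the graph of `f` in `E × N`. -/
theorem exists_extension (hN : IsWModule R N) {ι : M →ₗ[R] E} (hι : Function.Injective ι)
    (hE : IsGVTorsion R (E ⧸ LinearMap.range ι)) (f : M →ₗ[R] N) :
    ∃ F : E →ₗ[R] N, F ∘ₗ ι = f := by
  let G : Submodule R (E × N) := gvClosure (LinearMap.range (ι.prod f))
  have hinj : Function.Injective (Prod.fst ∘ G.subtype) := by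
    refine (injective_iff_map_eq_zero (LinearMap.fst R E N ∘ₗ G.subtype)).2 ?_
    rintro ⟨⟨e, n⟩, J, hJ, h⟩ (rfl : e = 0)
    have hn : n = 0 := hN.1 n ⟨J, hJ, fun a ha => by
      obtain ⟨m, hm⟩ := h a ha
      obtain ⟨hιm, hfm⟩ := Prod.ext_iff.1 hm
      have hm0 : m = 0 := (map_eq_zero_iff ι hι).1 (hιm.trans (smul_zero a))
      exact hfm.symm.trans (by rw [hm0]; exact map_zero f)⟩
    exact Subtype.ext (Prod.ext rfl hn)
  have hsurj : Function.Surjective (Prod.fst ∘ G.subtype) := fun e => by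
    obtain ⟨J, hJ, he⟩ := isGVTorsion_quotient_iff.1 hE e
    let mulE : J →ₗ[R] E := LinearMap.toSpanSingleton R E e ∘ₗ J.subtype
    let mulM : J →ₗ[R] M := mulE.codRestrictOfInjective ι hι fun a => he a a.2
    obtain ⟨n, hn⟩ := (isWModule_iff.1 hN).2 J hJ (f ∘ₗ mulM)
    exact ⟨⟨(e, n), J, hJ, fun a ha => ⟨mulM ⟨a, ha⟩,
      Prod.ext (LinearMap.codRestrictOfInjective_comp_apply ..) (hn ⟨a, ha⟩)⟩⟩, rfl⟩
  obtain ⟨F, hF⟩ := Submodule.exists_eq_graph ⟨hinj, hsurj⟩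
  refine ⟨F, LinearMap.ext fun m => ?_⟩
  have hm : (ι m, f m) ∈ F.graph := hF ▸ le_gvClosure _ ⟨m, rfl⟩
  exact ((LinearMap.mem_graph_iff F _).1 hm).symm

end IsWModule

end WModule

section SplittingIdeal

variable {R B C M E F : Type*} [CommRing R] [AddCommGroup B] [Module R B] [AddCommGroup C]
  [Module R C] [AddCommGroup M] [Module R M] [AddCommGroup E] [Module R E] [AddCommGroup F]
  [Module R F]

/-- The ideal of scalars `a` for which multiplication by `a` on the target of `g` factors through
`g`. It measures how far `g` is from being a split epimorphism. -/
def splittingIdeal (g : B →ₗ[R] C) : Ideal R :=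
  (LinearMap.range (g.compRight R (M := C))).comap
    (LinearMap.toSpanSingleton R (C →ₗ[R] C) LinearMap.id)

theorem mem_splittingIdeal {g : B →ₗ[R] C} {a : R} :
    a ∈ splittingIdeal g ↔ ∃ s : C →ₗ[R] B, g ∘ₗ s = a • LinearMap.id :=
  Iff.rfl

theorem mul_mem_splittingIdeal [Module.Projective R F] {ι : M →ₗ[R] E}
    (hι : Function.Injective ι) {π : F →ₗ[R] E} {g : B →ₗ[R] M} (hg : Function.Surjective g)
    {a b : R} (ha : ∀ e : E, a • e ∈ LinearMap.range ι) (hb : b ∈ splittingIdeal π) :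
    a * b ∈ splittingIdeal g := by
  obtain ⟨s, hs⟩ := mem_splittingIdeal.1 hb
  let c : E →ₗ[R] M := (a • LinearMap.id).codRestrictOfInjective ι hι ha
  have hc : ι ∘ₗ c = a • LinearMap.id := LinearMap.codRestrictOfInjective_comp ..
  obtain ⟨u, hu⟩ := Module.projective_lifting_property g (c ∘ₗ π) hg
  refine mem_splittingIdeal.2 ⟨u ∘ₗ s ∘ₗ ι, (LinearMap.cancel_left hι).1 ?_⟩
  calc ι ∘ₗ g ∘ₗ u ∘ₗ s ∘ₗ ι = (ι ∘ₗ c) ∘ₗ (π ∘ₗ s) ∘ₗ ι :=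
        congr(ι ∘ₗ $hu ∘ₗ s ∘ₗ ι)
    _ = ι ∘ₗ ((a * b) • LinearMap.id) := by
        rw [hc, hs]
        ext m
        simp [mul_smul]

end SplittingIdeal

section WSplit

variable {R : Type u} [CommRing R] {B C M E F : Type u} [AddCommGroup B] [Module R B]
  [AddCommGroup C] [Module R C] [AddCommGroup M] [Module R M] [AddCommGroup E] [Module R E]
  [AddCommGroup F] [Module R F]

theorem isWSplitSeq_iff {g : B →ₗ[R] C} :
    IsWSplitSeq R g ↔ ∃ J : Ideal R, IsGVIdeal R J ∧ J ≤ splittingIdeal g := by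
  constructor
  · rintro ⟨n, d, hd, h, hgh⟩
    refine ⟨_, hd, Ideal.span_le.2 ?_⟩
    rintro _ ⟨k, rfl⟩
    exact ⟨h k, LinearMap.ext (hgh k)⟩
  · rintro ⟨J, hJ, hJg⟩
    obtain ⟨n, d, rfl⟩ := Submodule.fg_iff_exists_fin_generating_family.1 hJ.1
    choose h hgh using fun k => hJg (Submodule.subset_span (Set.mem_range_self k))
    exact ⟨n, d, hJ, h, fun k => LinearMap.congr_fun (hgh k)⟩

/-- The class of `0 → ker π → F → C → 0` in `Ext¹(C, ker π)` is the obstruction to splitting, so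
its annihilator consists of scalars that factor through `π`. -/
theorem isWSplitSeq_of_isGVTorsion_extMod [Module.Projective R F] {π : F →ₗ[R] C}
    (hπ : Function.Surjective π) (h : IsGVTorsion R (extMod R C 1 (LinearMap.ker π))) :
    IsWSplitSeq R π := by
  have hexact := LinearMap.exact_subtype_ker_map π
  obtain ⟨δ, -, hδ⟩ := exists_exact_lcomp_extMod (Submodule.injective_subtype _) hexact hπ
    (LinearMap.ker π)
  obtain ⟨J, hJ, hJδ⟩ := h (δ LinearMap.id)
  refine isWSplitSeq_iff.2 ⟨J, hJ, fun a ha => ?_⟩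
  obtain ⟨ψ, hψ⟩ := (hδ (a • LinearMap.id)).1 (by rw [map_smul, hJδ a ha])
  let ρ : F →ₗ[R] F := a • LinearMap.id - (LinearMap.ker π).subtype ∘ₗ ψ
  have hρ : ρ ∘ₗ (LinearMap.ker π).subtype = 0 := by
    ext x
    have hψx : ψ x = a • x := LinearMap.congr_fun hψ x
    simp [ρ, hψx]
  obtain ⟨s, hs⟩ := (LinearMap.exact_lcomp_of_exact_of_surjective F hexact hπ ρ).1 hρ
  refine mem_splittingIdeal.2 ⟨s, LinearMap.ext fun c => ?_⟩
  obtain ⟨x, rfl⟩ := hπ c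
  have hsx : s (π x) = a • x - (ψ x : F) := LinearMap.congr_fun hs x
  simp [hsx]

theorem smul_mem_range_of_mem_splittingIdeal (hB : IsWModule R B) {ι : M →ₗ[R] E}
    (henv : IsWEnvelope R M E ι) {g : B →ₗ[R] M} {a : R} (ha : a ∈ splittingIdeal g) (e : E) :
    a • e ∈ LinearMap.range ι := by
  obtain ⟨hι, ⟨hE, -⟩, htors⟩ := henv
  obtain ⟨s, hs⟩ := mem_splittingIdeal.1 ha
  obtain ⟨s', hs'⟩ := hB.exists_extension hι htors s
  have hgs' : ι ∘ₗ g ∘ₗ s' = a • LinearMap.id := hE.linearMap_ext htors <| by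
    rw [LinearMap.comp_assoc, LinearMap.comp_assoc, hs', hs]
    ext m
    simp
  exact ⟨g (s' e), LinearMap.congr_fun hgs' e⟩

theorem IsWProjective.isGVTorsion_extMod (hwp : IsWProjective R M) (htf : IsGVTorsionFree R M)
    {ι : M →ₗ[R] E} (henv : IsWEnvelope R M E ι) (hC : IsWModule R C) :
    IsGVTorsion R (extMod R E 1 C) := by
  obtain ⟨hι, hE, htors⟩ := henv
  let e : (M ⧸ (⊥ : Submodule R M)) ≃ₗ[R] M := Submodule.quotEquivOfEqBot ⊥ rfl
  refine hwp ⊥ (fun x => ⟨?_, htf x⟩) E _ _ (ι ∘ₗ e.toLinearMap)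
    ⟨hι.comp e.injective, hE, ?_⟩ C _ _ hC.1 hC
  · exact fun hx => le_gvClosure ⊥ hx
  · rwa [LinearMap.range_comp_of_range_eq_top _ e.range]

end WSplit

/-- A GV-torsionfree w-projective module `M` is w-split iff `J·M_w ⊆ M` for some
GV-ideal `J` (where `ι : M →ₗ E` realizes the w-envelope `M_w`). -/
theorem stmt14 {R : Type u} [CommRing R] {M : Type u} [AddCommGroup M] [Module R M]
    (htf : IsGVTorsionFree R M) (hwp : IsWProjective R M)
    (E : Type u) [AddCommGroup E] [Module R E] (ι : M →ₗ[R] E)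
    (henv : IsWEnvelope R M E ι) :
    IsWSplitModule R M ↔
      ∃ J : Ideal R, IsGVIdeal R J ∧ ∀ a ∈ J, ∀ e : E, a • e ∈ LinearMap.range ι := by
  constructor
  · rintro ⟨P, _, _, _, g, -, hg⟩
    obtain ⟨J, hJ, hJg⟩ := isWSplitSeq_iff.1 hg
    exact ⟨J, hJ, fun a ha =>
      smul_mem_range_of_mem_splittingIdeal (.of_projective R P) henv (hJg ha)⟩
  · rintro ⟨J, hJ, hJE⟩
    have hπ := Finsupp.linearCombination_id_surjective R E
    have hg := Finsupp.linearCombination_id_surjective R M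
    have hK := (IsWModule.of_projective R (E →₀ R)).ker henv.2.1.1 (Finsupp.linearCombination R id)
    obtain ⟨J', hJ', hJ'π⟩ := isWSplitSeq_iff.1 <|
      isWSplitSeq_of_isGVTorsion_extMod hπ (hwp.isGVTorsion_extMod htf henv hK)
    refine ⟨M →₀ R, inferInstance, inferInstance, inferInstance, _, hg,
      isWSplitSeq_iff.2 ⟨J * J', hJ.mul hJ', Ideal.mul_le.2 fun a ha b hb => ?_⟩⟩
    exact mul_mem_splittingIdeal henv.1 hg (hJE a ha) (hJ'π hb)
end
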